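/- There exists a (14,6)-puzzle that is a strong uniquely solvable puzzle. -/

import Mathlib

/-- Exactly two of the three propositions hold. -/
def ExactlyTwo (A B C : Prop) : Prop :=
  (A ∧ B ∧ ¬C) ∨ (A ∧ ¬B ∧ C) ∨ (¬A ∧ B ∧ C)

/-- At least two of the three propositions hold. -/
def AtLeastTwo (A B C : Prop) : Prop :=
  (A ∧ B) ∨ (A ∧ C) ∨ (B ∧ C)

/-- A puzzle of width `k` is a finite set of rows in `{1,2,3}^k`; we use the
alphabet `Fin 3` whose three elements are denoted `1`, `2`, `3` (`3 = 0`).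
`P` is a strong uniquely solvable puzzle (strong USP). -/
def IsSUSP {k : ℕ} (P : Finset (Fin k → Fin 3)) : Prop :=
  ∀ π₁ π₂ π₃ : Equiv.Perm {r // r ∈ P},
    (π₁ = π₂ ∧ π₂ = π₃) ∨
    ∃ (r : {r // r ∈ P}) (c : Fin k),
      ExactlyTwo ((π₁ r).1 c = 1) ((π₂ r).1 c = 2) ((π₃ r).1 c = 3)

/-!
Call a triple of rows `(p, q, r)` unmatched if no column `c` satisfies exactly two of `p c = 1`,
`q c = 2`, `r c = 3`. A puzzle fails to be a strong USP exactly when permutations `π₁, π₂, π₃`,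
not all equal, choose an unmatched triple `(π₁ r, π₂ r, π₃ r)` for every row `r`. Linear programming
duality suggests how to exclude this: give the rows weights `a` and `b` such that
`a r + b r < a p + b q` for every unmatched triple `(p, q, r)` of rows that are not all the same.
Summed over all rows, the quantities `a (π₃ r) + b (π₃ r)` and `a (π₁ r) + b (π₂ r)` have the same
total, so the inequality can be strict for no `r`, and the three permutations agree everywhere. It
remains to exhibit fourteen rows together with such weights.
-/

/-- Unmatched triples of rows: a violation of the strong USP property is assembled from these. -/
def IsUnmatched {k : ℕ} (p q r : Fin k → Fin 3) : Prop :=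
  ∀ c, ¬ExactlyTwo (p c = 1) (q c = 2) (r c = 3)

/-- The weights `a` and `b` separate the unmatched triples of an indexed family of rows from the
constant triples. This is the dual certificate that the family is a strong USP; the weight of the
third entry of a triple is minus the sum of the other two weights. -/
def IsWeightCertificate {ι M : Type*} [Add M] [LT M] {k : ℕ} (row : ι → Fin k → Fin 3)
    (a b : ι → M) : Prop :=
  ∀ p q r, IsUnmatched (row p) (row q) (row r) → (p = q ∧ q = r) ∨ a r + b r < a p + b q

instance ExactlyTwo.instDecidable (A B C : Prop) [Decidable A] [Decidable B] [Decidable C] :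
    Decidable (ExactlyTwo A B C) :=
  inferInstanceAs (Decidable ((A ∧ B ∧ ¬C) ∨ (A ∧ ¬B ∧ C) ∨ (¬A ∧ B ∧ C)))

instance IsUnmatched.instDecidable {k : ℕ} (p q r : Fin k → Fin 3) :
    Decidable (IsUnmatched p q r) :=
  inferInstanceAs (Decidable (∀ c, ¬ExactlyTwo (p c = 1) (q c = 2) (r c = 3)))

instance IsWeightCertificate.instDecidable {ι M : Type*} [Fintype ι] [DecidableEq ι] [Add M] [LT M]
    [DecidableLT M] {k : ℕ} (row : ι → Fin k → Fin 3) (a b : ι → M) :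
    Decidable (IsWeightCertificate row a b) :=
  inferInstanceAs (Decidable (∀ p q r, IsUnmatched (row p) (row q) (row r) →
    (p = q ∧ q = r) ∨ a r + b r < a p + b q))

theorem isUnmatched_self {k : ℕ} (p : Fin k → Fin 3) : IsUnmatched p p p := by
  intro c
  generalize p c = x
  revert x
  decide

theorem isSUSP_iff_forall_isUnmatched {k : ℕ} {P : Finset (Fin k → Fin 3)} :
    IsSUSP P ↔ ∀ π₁ π₂ π₃ : Equiv.Perm {r // r ∈ P},
      (∀ r, IsUnmatched (π₁ r).1 (π₂ r).1 (π₃ r).1) → π₁ = π₂ ∧ π₂ = π₃ := by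
  simp only [IsSUSP, IsUnmatched, or_iff_not_imp_right, not_exists]

theorem add_comp_perm_eq_of_forall_le {ι M : Type*} [Finite ι] [AddCommMonoid M] [PartialOrder M]
    [IsOrderedCancelAddMonoid M] (a b : ι → M) (π₁ π₂ π₃ : Equiv.Perm ι)
    (hle : ∀ i, a (π₃ i) + b (π₃ i) ≤ a (π₁ i) + b (π₂ i)) (i : ι) :
    a (π₃ i) + b (π₃ i) = a (π₁ i) + b (π₂ i) := by
  cases nonempty_fintype ι
  have hsum : ∑ i, (a (π₃ i) + b (π₃ i)) = ∑ i, (a (π₁ i) + b (π₂ i)) := by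
    simp only [Finset.sum_add_distrib, Equiv.sum_comp]
  exact (Finset.sum_eq_sum_iff_of_le fun i _ => hle i).1 hsum i (Finset.mem_univ i)

namespace IsWeightCertificate

theorem comp_injective {ι κ M : Type*} [Add M] [LT M] {k : ℕ} {row : ι → Fin k → Fin 3}
    {a b : ι → M} (h : IsWeightCertificate row a b) {f : κ → ι} (hf : Function.Injective f) :
    IsWeightCertificate (row ∘ f) (a ∘ f) (b ∘ f) := fun p q r hpqr =>
  (h (f p) (f q) (f r) hpqr).imp_left (And.imp (@hf p q) (@hf q r))

theorem injective {ι M : Type*} [Add M] [Preorder M] {k : ℕ} {row : ι → Fin k → Fin 3}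
    {a b : ι → M} (h : IsWeightCertificate row a b) : Function.Injective row := by
  intro p q hpq
  by_contra hne
  have hlt {s t : ι} (hst : row s = row t) (hne : s ≠ t) : a t + b t < a s + b s :=
    (h s s t (hst ▸ isUnmatched_self (row s))).resolve_left fun heq => hne heq.2
  exact (hlt hpq hne).asymm (hlt hpq.symm (Ne.symm hne))

section OrderedCancel

variable {ι M : Type*} [AddCommMonoid M] [PartialOrder M] [IsOrderedCancelAddMonoid M] {k : ℕ}

theorem perm_eq [Finite ι] {row : ι → Fin k → Fin 3} {a b : ι → M}
    (h : IsWeightCertificate row a b) {π₁ π₂ π₃ : Equiv.Perm ι}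
    (hπ : ∀ i, IsUnmatched (row (π₁ i)) (row (π₂ i)) (row (π₃ i))) : π₁ = π₂ ∧ π₂ = π₃ := by
  have hcase (i : ι) := h (π₁ i) (π₂ i) (π₃ i) (hπ i)
  have hle (i : ι) : a (π₃ i) + b (π₃ i) ≤ a (π₁ i) + b (π₂ i) := by
    rcases hcase i with ⟨h₁₂, h₂₃⟩ | hlt
    · rw [h₁₂, h₂₃]
    · exact hlt.le
  have hconst (i : ι) : π₁ i = π₂ i ∧ π₂ i = π₃ i :=
    (hcase i).resolve_right (add_comp_perm_eq_of_forall_le a b π₁ π₂ π₃ hle i).not_lt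
  exact ⟨Equiv.ext fun i => (hconst i).1, Equiv.ext fun i => (hconst i).2⟩

theorem isSUSP {P : Finset (Fin k → Fin 3)} {a b : {r // r ∈ P} → M}
    (h : IsWeightCertificate Subtype.val a b) : IsSUSP P :=
  isSUSP_iff_forall_isUnmatched.2 fun _ _ _ => h.perm_eq

theorem isSUSP_map [Fintype ι] {row : ι ↪ Fin k → Fin 3} {a b : ι → M}
    (h : IsWeightCertificate row a b) : IsSUSP (Finset.univ.map row) := by
  have hmem (x : {r // r ∈ Finset.univ.map row}) : ∃ i, row i = x.1 := by
    simpa only [Finset.mem_map, Finset.mem_univ, true_and] using x.2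
  choose index hindex using hmem
  have hval : row ∘ index = Subtype.val := funext hindex
  have hinj : Function.Injective index :=
    .of_comp (f := row) (hval ▸ Subtype.val_injective)
  exact isSUSP (hval ▸ h.comp_injective hinj)

end OrderedCancel

end IsWeightCertificate

/-- The rows of a `(14, 6)`-puzzle. -/
def fourteenRow : Fin 14 → Fin 6 → Fin 3 :=
  ![![2, 3, 1, 1, 1, 2], ![2, 1, 1, 2, 3, 2], ![3, 2, 3, 1, 3, 2], ![3, 2, 1, 2, 1, 2],
    ![3, 3, 3, 2, 3, 2], ![2, 2, 3, 1, 2, 1], ![2, 1, 1, 1, 2, 3], ![3, 1, 1, 1, 1, 3],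
    ![2, 3, 3, 2, 3, 1], ![3, 3, 1, 2, 2, 2], ![3, 3, 3, 1, 1, 2], ![3, 2, 1, 1, 3, 3],
    ![3, 1, 3, 2, 1, 1], ![2, 1, 3, 1, 3, 1]]

/-- The weight of each row of `fourteenRow` as the first entry of a triple. Together with
`secondWeight` it is an integral solution of the linear inequalities `a r + b r + 1 ≤ a p + b q`
given by the 483 nonconstant unmatched triples `(p, q, r)`. -/
def firstWeight : Fin 14 → ℤ :=
  ![-73, 0, 23, -3, 103, 0, -68, -79, 61, 1, 16, -64, 48, -2]

/-- The weight of each row of `fourteenRow` as the second entry of a triple. -/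
def secondWeight : Fin 14 → ℤ :=
  ![-16, -85, 0, -79, -76, -8, -5, 35, -55, -81, 5, 30, -33, 7]

theorem isWeightCertificate_fourteenRow :
    IsWeightCertificate fourteenRow firstWeight secondWeight := by
  decide +kernel

/-- There is a `(14, 6)`-puzzle that is a strong uniquely solvable puzzle. -/
theorem exists_susp_14_6 :
    ∃ P : Finset (Fin 6 → Fin 3), P.card = 14 ∧ IsSUSP P := by
  let rows : Fin 14 ↪ Fin 6 → Fin 3 := ⟨fourteenRow, isWeightCertificate_fourteenRow.injective⟩
  have hcard : (Finset.univ.map rows).card = 14 := by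
    rw [Finset.card_map, Finset.card_univ, Fintype.card_fin]
  have hsusp : IsSUSP (Finset.univ.map rows) :=
    IsWeightCertificate.isSUSP_map (row := rows) isWeightCertificate_fourteenRow
  exact ⟨Finset.univ.map rows, hcard, hsusp⟩
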